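/- Let p_1 < p_2 < ... denote the sequence of all primes. Then the limit as N → ∞ of (1/N) · ∑_{i=1}^N φ(p_i − 1)/(p_i − 1) exists and equals Artin's constant A = ∏_p (1 − 1/(p(p−1))). -/

import Mathlib

open Filter

/-- Artin's constant `A = ∏_p (1 - 1/(p(p-1)))`, product over all primes. -/
noncomputable def artinConstant : ℝ :=
  ∏' p : Nat.Primes, (1 - 1 / (((p : ℕ) : ℝ) * (((p : ℕ) : ℝ) - 1)))

/-!
Since `φ(n)/n = ∏_{l ∣ n} (1 - 1/l)`, the average of `φ(p - 1)/(p - 1)` restricted to the primes `l`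
of a finite set `S` expands into a finite combination of the densities of the primes `p ≡ 1` modulo
squarefree `q`. These densities are `1/φ(q)`, and the combination is `∏_{l ∈ S} (1 - 1/(l(l - 1)))`.

The densities come from the Wiener–Ikehara theorem applied to the logarithmic derivatives of the
Dirichlet `L`-functions, which do not vanish on `re s = 1`. In that theorem a nonnegative `b` with
`u ↦ exp u * b u` monotone is averaged against kernels with compactly supported Fourier transform:
the averages converge by the Riemann–Lebesgue lemma and, since `b` cannot drop quickly, so does `b`.

The error of the truncation to `S` is controlled by the Brun–Titchmarsh type bound
`∑ log p ≤ 6 n log l / l` over the primes `p ≤ n` with `p ≡ 1` modulo `l`, uniform in the prime `l`,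
and by the convergence of `∑ log l / l²`. All averages are first taken with weights `log p`, which
are removed at the end because `log p` is close to `log n` for most primes `p ≤ n`.
-/

section FourierKernel

open Complex MeasureTheory Set
open scoped FourierTransform Topology Real

lemma conj_fourier_ofReal_of_even {f : ℝ → ℝ} (hf : f.Even) (w : ℝ) :
    (starRingEnd ℂ) (𝓕 (fun x => (f x : ℂ)) w) = 𝓕 (fun x => (f x : ℂ)) w := by
  simp_rw [Real.fourier_real_eq_integral_exp_smul]
  rw [← integral_conj, ← integral_neg_eq_self]
  refine integral_congr_ae (.of_forall fun v => ?_)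
  simp [hf v, ← exp_conj, conj_ofNat]

lemma fourier_comp_div (f : ℝ → ℂ) {l : ℝ} (hl : 0 < l) (w : ℝ) :
    𝓕 (fun t => f (t / l)) w = l * 𝓕 f (l * w) := by
  have hcov := Measure.integral_comp_div
    (fun t : ℝ => exp ((-2 * π * t * (l * w) : ℝ) * I) • f t) l
  rw [abs_of_pos hl, real_smul] at hcov
  rw [Real.fourier_real_eq_integral_exp_smul, Real.fourier_real_eq_integral_exp_smul, ← hcov]
  refine integral_congr_ae (.of_forall fun t => ?_)
  have harg : -2 * π * t * w = -2 * π * (t / l) * (l * w) := by field_simp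
  simp only [harg]

/-- The Fourier character `t ↦ exp (2πiyt)` of frequency `y`. -/
noncomputable def fourierMode (y t : ℝ) : ℂ :=
  exp ((2 * π * y * t : ℝ) * I)

@[fun_prop]
lemma continuous_fourierMode (y : ℝ) : Continuous (fourierMode y) := by
  unfold fourierMode
  fun_prop

lemma fourier_fourierMode_mul (f : ℝ → ℂ) (y w : ℝ) :
    𝓕 (fun t => fourierMode y t * f t) w = 𝓕 f (w - y) := by
  simp_rw [Real.fourier_real_eq_integral_exp_smul, fourierMode, smul_eq_mul, ← mul_assoc,
    ← exp_add]
  refine integral_congr_ae (.of_forall fun t => ?_)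
  beta_reduce
  congr 2
  push_cast
  ring

lemma tendsto_integral_fourierMode_mul_atTop (f : ℝ → ℂ) :
    Tendsto (fun y => ∫ t, fourierMode y t * f t) atTop (𝓝 0) := by
  have hneg : Tendsto (fun y : ℝ => -y) atTop (cocompact ℝ) :=
    tendsto_neg_atTop_atBot.mono_right atBot_le_cocompact
  refine ((Real.zero_at_infty_fourier f).comp hneg).congr fun y => ?_
  rw [Function.comp_apply, ← zero_sub, ← fourier_fourierMode_mul,
    Real.fourier_real_eq_integral_exp_smul]
  simp

/-- A probability density whose Fourier transform has compact support, encoded as the Fourier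
transform of a continuous compactly supported function. Averages against such kernels only see a
bounded range of frequencies. -/
structure IsBandLimitedKernel (k : ℝ → ℝ) : Prop where
  nonneg : ∀ x, 0 ≤ k x
  integrable : Integrable k
  integral_eq_one : ∫ x, k x = 1
  exists_fourier_eq : ∃ h : ℝ → ℂ, Continuous h ∧ HasCompactSupport h ∧ ∀ w, 𝓕 h w = k w

lemma exists_fourier_eq_sq {g : ℝ → ℂ} (hg : Continuous g) (hgs : HasCompactSupport g) :
    ∃ c : ℝ → ℂ, Continuous c ∧ HasCompactSupport c ∧ ∀ w, 𝓕 c w = 𝓕 g w ^ 2 := by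
  have hgi : Integrable g := hg.integrable_of_hasCompactSupport hgs
  refine ⟨convolution g g (ContinuousLinearMap.mul ℂ ℂ) volume,
    hgs.continuous_convolution_right _ hgi.locallyIntegrable hg, hgs.convolution _ hgs,
    fun w => ?_⟩
  rw [Real.fourier_mul_convolution_eq hgi hgi, sq]

lemma isBandLimitedKernel_normalized_sq {g : ℝ → ℂ} {r : ℝ → ℝ} (hg : Continuous g)
    (hgs : HasCompactSupport g) (hgr : ∀ w, 𝓕 g w = r w) (hr : Integrable fun w => r w ^ 2)
    (hpos : 0 < ∫ w, r w ^ 2) :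
    IsBandLimitedKernel fun w => (∫ x, r x ^ 2)⁻¹ * r w ^ 2 where
  nonneg _ := by positivity
  integrable := hr.const_mul _
  integral_eq_one := by rw [integral_const_mul, inv_mul_cancel₀ hpos.ne']
  exists_fourier_eq := by
    obtain ⟨c, hc, hcs, hcr⟩ := exists_fourier_eq_sq hg hgs
    refine ⟨fun t => ((∫ x, r x ^ 2 : ℝ) : ℂ)⁻¹ * c t, continuous_const.mul hc, hcs.mul_left,
      fun w => ?_⟩
    have hcw := hcr w
    rw [Real.fourier_real_eq_integral_exp_smul] at hcw ⊢
    simp_rw [smul_eq_mul, mul_left_comm _ (_⁻¹ : ℂ)] at hcw ⊢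
    rw [integral_const_mul, hcw, hgr]
    push_cast
    rfl

lemma exists_isBandLimitedKernel : ∃ k, IsBandLimitedKernel k := by
  let φ : ContDiffBump (0 : ℝ) := ⟨1, 2, one_pos, one_lt_two⟩
  let g : ℝ → ℂ := fun x => φ x
  let r : ℝ → ℝ := fun w => (𝓕 g w).re
  have hgs : HasCompactSupport g := φ.hasCompactSupport.comp_left ofReal_zero
  have hg : ContDiff ℝ (⊤ : ℕ∞) g := ofRealCLM.contDiff.comp φ.contDiff
  have hschwartz : 𝓕 g = (𝓕 (hgs.toSchwartzMap hg) : SchwartzMap ℝ ℂ) := by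
    rw [SchwartzMap.fourier_coe]
    rfl
  have hgr (w : ℝ) : 𝓕 g w = r w :=
    (conj_eq_iff_re.1 (conj_fourier_ofReal_of_even φ.neg w)).symm
  have hr : Continuous r := by
    refine continuous_re.comp ?_
    rw [hschwartz]
    exact SchwartzMap.continuous _
  have hr2 : Integrable fun w => r w ^ 2 := by
    have hL2 := (SchwartzMap.memLp (𝓕 (hgs.toSchwartzMap hg)) 2 volume).integrable_norm_pow
      two_ne_zero
    rw [← hschwartz] at hL2
    exact hL2.congr (.of_forall fun w => by simp [hgr])
  have hr0 : r 0 = ∫ x, φ x := by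
    rw [← ofReal_inj, ← hgr, Real.fourier_real_eq_integral_exp_smul, ← integral_complex_ofReal]
    simp [g]
  refine ⟨_, isBandLimitedKernel_normalized_sq hg.continuous hgs hgr hr2 ?_⟩
  refine integral_pos_of_integrable_nonneg_nonzero (x := 0) (hr.pow 2) hr2
    (fun _ => sq_nonneg _) (pow_ne_zero 2 ?_)
  rw [hr0]
  exact φ.integral_pos.ne'

namespace IsBandLimitedKernel

variable {k : ℝ → ℝ}

lemma comp_mul (hk : IsBandLimitedKernel k) {l : ℝ} (hl : 0 < l) :
    IsBandLimitedKernel fun w => l * k (l * w) where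
  nonneg _ := mul_nonneg hl.le (hk.nonneg _)
  integrable := (hk.integrable.comp_mul_left' hl.ne').const_mul l
  integral_eq_one := by
    rw [integral_const_mul, Measure.integral_comp_mul_left, hk.integral_eq_one, smul_eq_mul,
      mul_one, abs_of_pos (inv_pos.2 hl), mul_inv_cancel₀ hl.ne']
  exists_fourier_eq := by
    obtain ⟨h, hh, hs, hkh⟩ := hk.exists_fourier_eq
    refine ⟨fun t => h (t / l), by fun_prop,
      hs.comp_homeomorph (Homeomorph.mulRight₀ l⁻¹ (inv_ne_zero hl.ne')), fun w => ?_⟩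
    rw [fourier_comp_div h hl, hkh, ofReal_mul]

lemma integrable_mul (hk : IsBandLimitedKernel k) {f : ℝ → ℝ} (hf : Measurable f) {M : ℝ}
    (hM : ∀ u, |f u| ≤ M) (y : ℝ) : Integrable fun u => f u * k (u - y) :=
  (hk.integrable.comp_sub_right y).bdd_mul hf.aestronglyMeasurable (.of_forall hM)

end IsBandLimitedKernel

lemma exists_isBandLimitedKernel_concentrated {η : ℝ} (hη : 0 < η) :
    ∃ k, IsBandLimitedKernel k ∧ 1 - η ≤ ∫ v in (-η)..η, k v := by
  obtain ⟨k, hk⟩ := exists_isBandLimitedKernel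
  have hmass : Tendsto (fun R : ℝ => ∫ v in (-R)..R, k v) atTop (𝓝 1) :=
    hk.integral_eq_one ▸
      intervalIntegral_tendsto_integral hk.integrable tendsto_neg_atTop_atBot tendsto_id
  obtain ⟨R, hR, hRpos⟩ :=
    ((hmass.eventually_const_le (sub_lt_self 1 hη)).and (eventually_gt_atTop 0)).exists
  refine ⟨_, hk.comp_mul (div_pos hRpos hη), ?_⟩
  rw [intervalIntegral.integral_const_mul, intervalIntegral.mul_integral_comp_mul_left, mul_neg,
    div_mul_cancel₀ R hη.ne']
  exact hR

end FourierKernel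

section LaplaceBoundary

open Complex MeasureTheory Set
open scoped FourierTransform Topology Real

variable {B : ℝ → ℂ} {K : ℝ} {H : ℂ → ℂ} {h : ℝ → ℂ}

lemma integrableOn_exp_neg_mul_mul (hBm : Measurable B) (hK : ∀ u, ‖B u‖ ≤ K) {z : ℂ}
    (hz : 0 < z.re) : IntegrableOn (fun u : ℝ => exp (-z * u) * B u) (Ioi 0) :=
  (integrableOn_exp_mul_complex_Ioi (by simpa using hz) 0).mul_bdd
    hBm.aestronglyMeasurable (.of_forall hK)

lemma fourier_indicator_exp_neg_mul (δ t : ℝ) :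
    𝓕 ((Ioi 0).indicator fun u : ℝ => exp (-(δ : ℂ) * u) * B u) t =
      ∫ u in Ioi (0 : ℝ), exp (-(δ + (2 * π * t : ℝ) * I) * u) * B u := by
  rw [Real.fourier_real_eq_integral_exp_smul, ← integral_indicator measurableSet_Ioi]
  refine integral_congr_ae (.of_forall fun u => ?_)
  by_cases hu : u ∈ Ioi 0
  · simp only [indicator_of_mem hu, smul_eq_mul, ← mul_assoc, ← exp_add]
    congr 2
    push_cast
    ring
  · simp only [indicator_of_notMem hu, smul_zero]

lemma integral_laplace_mul_eq (hBm : Measurable B) (hK : ∀ u, ‖B u‖ ≤ K)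
    (hBH : ∀ z : ℂ, 0 < z.re → ∫ u in Ioi (0 : ℝ), exp (-z * u) * B u = H z)
    (hh : Integrable h) {δ : ℝ} (hδ : 0 < δ) :
    ∫ t : ℝ, H (δ + (2 * π * t : ℝ) * I) * h t =
      ∫ u in Ioi (0 : ℝ), exp (-(δ : ℂ) * u) * B u * 𝓕 h u := by
  have hintegrable : Integrable ((Ioi 0).indicator fun u : ℝ => exp (-(δ : ℂ) * u) * B u) :=
    (integrable_indicator_iff measurableSet_Ioi).2
      (integrableOn_exp_neg_mul_mul hBm hK (by simpa using hδ))
  have hflip : ∫ t, 𝓕 ((Ioi 0).indicator fun u : ℝ => exp (-(δ : ℂ) * u) * B u) t • h t =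
      ∫ u, (Ioi 0).indicator (fun u : ℝ => exp (-(δ : ℂ) * u) * B u) u • 𝓕 h u := by
    simpa only [flip_innerₗ] using! VectorFourier.integral_fourierIntegral_smul_eq_flip
      (L := innerₗ ℝ) (μ := volume) (ν := volume) Real.continuous_fourierChar continuous_inner
      hintegrable hh
  have hF (t : ℝ) : 𝓕 ((Ioi 0).indicator fun u : ℝ => exp (-(δ : ℂ) * u) * B u) t =
      H (δ + (2 * π * t : ℝ) * I) := by
    rw [fourier_indicator_exp_neg_mul, hBH _ (by simpa using hδ)]
  simp_rw [hF, smul_eq_mul, ← indicator_mul_left] at hflip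
  rw [hflip, integral_indicator measurableSet_Ioi]

lemma tendsto_integral_continuousOn_halfPlane_mul (hH : ContinuousOn H {z | 0 ≤ z.re})
    (hh : Continuous h) (hs : HasCompactSupport h) :
    Tendsto (fun δ : ℝ => ∫ t : ℝ, H (δ + (2 * π * t : ℝ) * I) * h t) (𝓝[>] 0)
      (𝓝 (∫ t : ℝ, H ((2 * π * t : ℝ) * I) * h t)) := by
  let Φ : ℝ × ℝ → ℂ := fun p => p.1 + (2 * π * p.2 : ℝ) * I
  have hΦ : Continuous Φ := by fun_prop
  have hre (p : ℝ × ℝ) : (Φ p).re = p.1 := by simp [Φ]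
  have hcont : ContinuousOn (H ∘ Φ) {p | 0 ≤ p.1} :=
    hH.comp hΦ.continuousOn fun p (hp : 0 ≤ p.1) => hp.trans_eq (hre p).symm
  obtain ⟨C, hC⟩ := (isCompact_Icc.prod hs).exists_bound_of_continuousOn
    (hcont.mono fun p hp => hp.1.1 : ContinuousOn (H ∘ Φ) (Icc 0 1 ×ˢ tsupport h))
  refine tendsto_integral_filter_of_dominated_convergence (fun t => C * ‖h t‖) ?_ ?_
    ((hh.integrable_of_hasCompactSupport hs).norm.const_mul _) (.of_forall fun t => ?_)
  · filter_upwards [self_mem_nhdsWithin] with δ hδ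
    exact ((hcont.comp_continuous (f := fun t => (δ, t)) (by fun_prop)
      fun _ => (mem_Ioi.1 hδ).le).mul hh).aestronglyMeasurable
  · filter_upwards [Ioo_mem_nhdsGT zero_lt_one] with δ hδ
    refine .of_forall fun t => ?_
    by_cases ht : t ∈ tsupport h
    · rw [norm_mul]
      gcongr
      exact hC (δ, t) ⟨⟨hδ.1.le, hδ.2.le⟩, ht⟩
    · simp [image_eq_zero_of_notMem_tsupport ht]
  · refine Tendsto.mul_const _ ?_
    have hlim : Tendsto (fun δ : ℝ => (δ, t)) (𝓝[>] 0) (𝓝[{p | 0 ≤ p.1}] (0, t)) :=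
      tendsto_nhdsWithin_iff.2 ⟨(Continuous.tendsto (by fun_prop) 0).mono_left
        nhdsWithin_le_nhds, eventually_mem_nhdsWithin.mono fun δ hδ => (mem_Ioi.1 hδ).le⟩
    simpa [Φ, Function.comp_def] using (hcont (0, t) (le_refl (0 : ℝ))).tendsto.comp hlim

lemma tendsto_integral_exp_neg_mul_mul (hBm : Measurable B) (hK : ∀ u, ‖B u‖ ≤ K)
    {g : ℝ → ℂ} (hg : Integrable g) :
    Tendsto (fun δ : ℝ => ∫ u in Ioi (0 : ℝ), exp (-(δ : ℂ) * u) * B u * g u) (𝓝[>] 0)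
      (𝓝 (∫ u in Ioi (0 : ℝ), B u * g u)) := by
  refine tendsto_integral_filter_of_dominated_convergence (fun u => K * ‖g u‖) ?_ ?_
    (hg.norm.const_mul K).integrableOn (.of_forall fun u => ?_)
  · exact .of_forall fun δ => (Measurable.aestronglyMeasurable (by fun_prop)).mul
      hg.aestronglyMeasurable.restrict
  · filter_upwards [self_mem_nhdsWithin] with δ hδ
    filter_upwards [ae_restrict_mem measurableSet_Ioi] with u hu
    have hexp : ‖exp (-(δ : ℂ) * u)‖ ≤ 1 := by
      simpa [norm_exp] using (mul_pos (mem_Ioi.1 hδ) (mem_Ioi.1 hu)).le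
    rw [norm_mul, norm_mul]
    gcongr
    exact (mul_le_of_le_one_left (norm_nonneg _) hexp).trans (hK u)
  · have hcont : Continuous fun δ : ℝ => exp (-(δ : ℂ) * u) * B u * g u := by fun_prop
    simpa using (hcont.tendsto 0).mono_left nhdsWithin_le_nhds

lemma integral_boundary_laplace_mul_eq (hBm : Measurable B) (hK : ∀ u, ‖B u‖ ≤ K)
    (hH : ContinuousOn H {z | 0 ≤ z.re})
    (hBH : ∀ z : ℂ, 0 < z.re → ∫ u in Ioi (0 : ℝ), exp (-z * u) * B u = H z)
    (hh : Continuous h) (hs : HasCompactSupport h) (hFh : Integrable (𝓕 h)) :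
    ∫ t : ℝ, H ((2 * π * t : ℝ) * I) * h t = ∫ u in Ioi (0 : ℝ), B u * 𝓕 h u := by
  refine tendsto_nhds_unique (tendsto_integral_continuousOn_halfPlane_mul hH hh hs)
    ((tendsto_integral_exp_neg_mul_mul hBm hK hFh).congr' ?_)
  filter_upwards [self_mem_nhdsWithin] with δ hδ
  exact (integral_laplace_mul_eq hBm hK hBH (hh.integrable_of_hasCompactSupport hs) hδ).symm

theorem tendsto_integral_mul_fourier_sub (hBm : Measurable B) (hK : ∀ u, ‖B u‖ ≤ K)
    (hH : ContinuousOn H {z | 0 ≤ z.re})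
    (hBH : ∀ z : ℂ, 0 < z.re → ∫ u in Ioi (0 : ℝ), exp (-z * u) * B u = H z)
    (hh : Continuous h) (hs : HasCompactSupport h) (hFh : Integrable (𝓕 h)) :
    Tendsto (fun y => ∫ u in Ioi (0 : ℝ), B u * 𝓕 h (u - y)) atTop (𝓝 0) := by
  refine (tendsto_integral_fourierMode_mul_atTop
    fun t => H ((2 * π * t : ℝ) * I) * h t).congr fun y => ?_
  have hFy : Integrable (𝓕 fun t => fourierMode y t * h t) :=
    (hFh.comp_sub_right y).congr (.of_forall fun w => (fourier_fourierMode_mul h y w).symm)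
  simpa only [fourier_fourierMode_mul, mul_left_comm] using integral_boundary_laplace_mul_eq
    hBm hK hH hBH (by fun_prop : Continuous fun t => fourierMode y t * h t) hs.mul_left hFy

end LaplaceBoundary

section Tauberian

open MeasureTheory Set
open scoped FourierTransform Topology

namespace IsBandLimitedKernel

variable {k f : ℝ → ℝ} {η L y : ℝ}

lemma tendsto_integral_Ioi_comp_sub (hk : IsBandLimitedKernel k) :
    Tendsto (fun y => ∫ u in Ioi (0 : ℝ), k (u - y)) atTop (𝓝 1) := by
  have hcover := (aecover_Ioi (μ := volume) tendsto_neg_atTop_atBot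
    ).integral_tendsto_of_countably_generated hk.integrable
  rw [hk.integral_eq_one] at hcover
  refine hcover.congr fun y => ?_
  rw [← integral_indicator measurableSet_Ioi, ← integral_indicator measurableSet_Ioi,
    ← integral_sub_right_eq_self _ y]
  simp [indicator_apply]

lemma mul_one_sub_le_integral (hk : IsBandLimitedKernel k) (hη0 : 0 < η) (hη1 : η ≤ 1)
    (hkη : 1 - η ≤ ∫ v in (-η)..η, k v) (hf : ∀ u, 0 ≤ f u)
    (hfk : Integrable fun u => f u * k (u - y)) (hL : ∀ u ∈ Icc (y - η) (y + η), L ≤ f u) :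
    L * (1 - η) ≤ ∫ u, f u * k (u - y) := by
  have hfk0 (u : ℝ) : 0 ≤ f u * k (u - y) := mul_nonneg (hf u) (hk.nonneg _)
  rcases le_total L 0 with hL0 | hL0
  · exact (mul_nonpos_of_nonpos_of_nonneg hL0 (sub_nonneg.2 hη1)).trans (integral_nonneg hfk0)
  calc L * (1 - η)
      ≤ L * ∫ v in (-η)..η, k v := by gcongr
    _ = ∫ u in (y - η)..(y + η), L * k (u - y) := by
        rw [intervalIntegral.integral_const_mul, intervalIntegral.integral_comp_sub_right,
          sub_sub_cancel_left, add_sub_cancel_left]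
    _ ≤ ∫ u in (y - η)..(y + η), f u * k (u - y) :=
        intervalIntegral.integral_mono_on (by linarith)
          ((hk.integrable.comp_sub_right y).const_mul L).intervalIntegrable
          hfk.intervalIntegrable
          fun u hu => mul_le_mul_of_nonneg_right (hL u hu) (hk.nonneg _)
    _ ≤ ∫ u, f u * k (u - y) := by
        rw [intervalIntegral.integral_of_le (by linarith)]
        exact setIntegral_le_integral hfk (.of_forall hfk0)

end IsBandLimitedKernel

variable {b : ℝ → ℝ} {M c : ℝ}

lemma measurable_of_monotone_exp_mul (hmono : Monotone fun u => Real.exp u * b u) :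
    Measurable b := by
  convert! Real.measurable_exp.inv.mul hmono.measurable using 1
  ext u
  simp

lemma exp_neg_mul_le_of_monotone_exp_mul (hb : ∀ u, 0 ≤ b u)
    (hmono : Monotone fun u => Real.exp u * b u) {η u v : ℝ} (huv : u ≤ v) (hη : v - u ≤ η) :
    Real.exp (-η) * b u ≤ b v := by
  have hexp : Real.exp (v - u) ≤ Real.exp η := Real.exp_le_exp.2 hη
  have huv' : b u ≤ Real.exp (v - u) * b v := by
    rw [Real.exp_sub, div_mul_eq_mul_div, le_div_iff₀ (Real.exp_pos u), mul_comm]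
    exact hmono huv
  rw [Real.exp_neg, inv_mul_le_iff₀ (Real.exp_pos η)]
  exact huv'.trans (mul_le_mul_of_nonneg_right hexp (hb v))

lemma IsBandLimitedKernel.integrable_indicator_mul {k : ℝ → ℝ} (hk : IsBandLimitedKernel k)
    (hbm : Measurable b) (hb : ∀ u, 0 ≤ b u) (hbM : ∀ u, b u ≤ M) (y : ℝ) :
    Integrable fun u => (Ioi 0).indicator b u * k (u - y) :=
  hk.integrable_mul (hbm.indicator measurableSet_Ioi) (fun u =>
    (abs_of_nonneg (indicator_nonneg (fun u _ => hb u) u)).trans_le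
      ((indicator_le_self' (fun u _ => hb u) u).trans (hbM u))) y

section Bounds

variable (hb : ∀ u, 0 ≤ b u) (hbM : ∀ u, b u ≤ M) (hmono : Monotone fun u => Real.exp u * b u)
  (hlim : ∀ k, IsBandLimitedKernel k →
    Tendsto (fun y => ∫ u in Ioi (0 : ℝ), b u * k (u - y)) atTop (𝓝 c))
include hb hbM hmono hlim

/- A lower bound for `b` propagates to the right, so `b z` is compared with the kernel average
centred at `z + η`; for the opposite inequality, the nonnegative function `M - b` is averaged around
`z - η`. -/
lemma eventually_exp_neg_mul_le {η : ℝ} (hη0 : 0 < η) (hη1 : η ≤ 1) :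
    ∀ᶠ z in atTop, Real.exp (-(2 * η)) * b z * (1 - η) ≤ c + η := by
  obtain ⟨k, hk, hkη⟩ := exists_isBandLimitedKernel_concentrated hη0
  have hshift : Tendsto (fun z : ℝ => z + η) atTop atTop :=
    tendsto_atTop_add_const_right _ _ tendsto_id
  filter_upwards [hshift.eventually
    ((hlim k hk).eventually_le_const (lt_add_of_pos_right c hη0)), eventually_gt_atTop 0]
    with z hz hz0
  refine le_trans ?_ hz
  rw [← integral_indicator measurableSet_Ioi]
  simp_rw [indicator_mul_left]
  refine hk.mul_one_sub_le_integral hη0 hη1 hkη (indicator_nonneg fun u _ => hb u)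
    (hk.integrable_indicator_mul (measurable_of_monotone_exp_mul hmono) hb hbM _) ?_
  rintro u ⟨hu1, hu2⟩
  rw [indicator_of_mem (mem_Ioi.2 (by linarith))]
  exact exp_neg_mul_le_of_monotone_exp_mul hb hmono (by linarith) (by linarith)

lemma eventually_sub_exp_mul_le {η : ℝ} (hη0 : 0 < η) (hη1 : η ≤ 1) :
    ∀ᶠ z in atTop, (M - Real.exp (2 * η) * b z) * (1 - η) ≤ M - (c - η) := by
  obtain ⟨k, hk, hkη⟩ := exists_isBandLimitedKernel_concentrated hη0
  have hind (u : ℝ) : (Ioi 0).indicator b u ≤ b u := indicator_le_self' (fun u _ => hb u) u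
  have hbk := hk.integrable_indicator_mul (measurable_of_monotone_exp_mul hmono) hb hbM
  have hMk (y : ℝ) : Integrable fun u => M * k (u - y) :=
    (hk.integrable.comp_sub_right y).const_mul M
  have hshift : Tendsto (fun z : ℝ => z - η) atTop atTop :=
    tendsto_atTop_add_const_right _ _ tendsto_id
  filter_upwards [hshift.eventually
    ((hlim k hk).eventually_const_le (sub_lt_self c hη0))] with z hz
  have hcompl : ∫ u, (M - (Ioi 0).indicator b u) * k (u - (z - η)) =
      M - ∫ u in Ioi (0 : ℝ), b u * k (u - (z - η)) := by
    simp_rw [sub_mul]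
    rw [integral_sub (hMk _) (hbk _), integral_const_mul, integral_sub_right_eq_self,
      hk.integral_eq_one, mul_one, ← integral_indicator measurableSet_Ioi]
    simp_rw [indicator_mul_left]
  refine le_trans ?_ (hcompl.trans_le (sub_le_sub_left hz M))
  refine hk.mul_one_sub_le_integral hη0 hη1 hkη (fun u => sub_nonneg.2 ((hind u).trans (hbM u)))
    ((hMk _).sub (hbk _) |>.congr (.of_forall fun u => (sub_mul _ _ _).symm)) ?_
  rintro u ⟨hu1, hu2⟩
  have hbu := exp_neg_mul_le_of_monotone_exp_mul hb hmono (η := 2 * η) (u := u) (v := z)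
    (by linarith) (by linarith)
  rw [Real.exp_neg, inv_mul_le_iff₀ (Real.exp_pos _)] at hbu
  linarith [hind u]

theorem tendsto_of_tendsto_integral_mul_kernel : Tendsto b atTop (𝓝 c) := by
  have hsmall : ∀ᶠ η : ℝ in 𝓝[>] 0, 0 < η ∧ η < 1 := Ioo_mem_nhdsGT one_pos
  refine tendsto_order.2 ⟨fun a ha => ?_, fun a ha => ?_⟩
  · have hlow : Tendsto (fun η : ℝ => (M - (M - (c - η)) / (1 - η)) / Real.exp (2 * η))
        (𝓝[>] 0) (𝓝 c) := by
      have : ContinuousAt (fun η : ℝ => (M - (M - (c - η)) / (1 - η)) / Real.exp (2 * η)) 0 := by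
        fun_prop (disch := simp)
      simpa using this.tendsto.mono_left nhdsWithin_le_nhds
    obtain ⟨η, hη, hη0, hη1⟩ := ((hlow.eventually_const_lt ha).and hsmall).exists
    filter_upwards [eventually_sub_exp_mul_le hb hbM hmono hlim hη0 hη1.le] with z hz
    rw [← le_div_iff₀ (sub_pos.2 hη1)] at hz
    refine hη.trans_le ((div_le_iff₀ (Real.exp_pos _)).2 ?_)
    linarith
  · have hup : Tendsto (fun η : ℝ => (c + η) / (1 - η) / Real.exp (-(2 * η)))
        (𝓝[>] 0) (𝓝 c) := by
      have : ContinuousAt (fun η : ℝ => (c + η) / (1 - η) / Real.exp (-(2 * η))) 0 := by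
        fun_prop (disch := simp)
      simpa using this.tendsto.mono_left nhdsWithin_le_nhds
    obtain ⟨η, hη, hη0, hη1⟩ := ((hup.eventually_lt_const ha).and hsmall).exists
    filter_upwards [eventually_exp_neg_mul_le hb hbM hmono hlim hη0 hη1.le] with z hz
    rw [← le_div_iff₀ (sub_pos.2 hη1)] at hz
    exact ((le_div_iff₀' (Real.exp_pos _)).2 hz).trans_lt hη

end Bounds

lemma integral_exp_neg_mul_Ioi_zero {z : ℂ} (hz : 0 < z.re) :
    ∫ u in Ioi (0 : ℝ), Complex.exp (-z * u) = 1 / z := by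
  rw [integral_exp_mul_complex_Ioi (by simpa using hz)]
  simp

theorem tendsto_of_laplace_sub_pole_continuousOn (hb : ∀ u, 0 ≤ b u) (hbM : ∀ u, b u ≤ M)
    (hmono : Monotone fun u => Real.exp u * b u) {H : ℂ → ℂ} (hH : ContinuousOn H {z | 0 ≤ z.re})
    (hbH : ∀ z : ℂ, 0 < z.re →
      ∫ u in Ioi (0 : ℝ), Complex.exp (-z * u) * (b u : ℂ) = c / z + H z) :
    Tendsto b atTop (𝓝 c) := by
  have hbm := measurable_of_monotone_exp_mul hmono
  refine tendsto_of_tendsto_integral_mul_kernel hb hbM hmono fun k hk => ?_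
  obtain ⟨h, hh, hs, hhk⟩ := hk.exists_fourier_eq
  let B : ℝ → ℂ := fun u => (b u - c : ℝ)
  have hB (u : ℝ) : ‖B u‖ ≤ M + |c| := by
    rw [Complex.norm_real, Real.norm_eq_abs]
    exact (abs_sub _ _).trans (by rw [abs_of_nonneg (hb u)]; gcongr; exact hbM u)
  have hBH (z : ℂ) (hz : 0 < z.re) : ∫ u in Ioi (0 : ℝ), Complex.exp (-z * u) * B u = H z := by
    have hbint : IntegrableOn (fun u : ℝ => Complex.exp (-z * u) * (b u : ℂ)) (Ioi 0) :=
      integrableOn_exp_neg_mul_mul (K := M) (by fun_prop) (fun u => by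
        simpa [abs_of_nonneg (hb u)] using hbM u) hz
    have hexp : IntegrableOn (fun u : ℝ => Complex.exp (-z * u)) (Ioi 0) :=
      integrableOn_exp_mul_complex_Ioi (by simpa using hz) 0
    simp_rw [B, Complex.ofReal_sub, mul_sub]
    rw [integral_sub hbint (hexp.mul_const _), hbH z hz, integral_mul_const,
      integral_exp_neg_mul_Ioi_zero hz]
    ring
  have hFh : Integrable (𝓕 h) := (funext hhk) ▸ hk.integrable.ofReal
  have hlim := tendsto_integral_mul_fourier_sub (by fun_prop) hB hH hBH hh hs hFh
  have hBk (y : ℝ) : ∫ u in Ioi (0 : ℝ), B u * 𝓕 h (u - y) =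
      ((∫ u in Ioi (0 : ℝ), b u * k (u - y)) - c * ∫ u in Ioi (0 : ℝ), k (u - y) : ℝ) := by
    have hbk : Integrable fun u => b u * k (u - y) :=
      hk.integrable_mul hbm (fun u => (abs_of_nonneg (hb u)).trans_le (hbM u)) y
    rw [← integral_const_mul, ← integral_sub hbk.integrableOn
      ((hk.integrable.comp_sub_right y).const_mul c).integrableOn, ← integral_complex_ofReal]
    simp_rw [hhk, B, ← Complex.ofReal_mul, sub_mul]
  simp_rw [hBk] at hlim
  have hre := (Complex.continuous_re.tendsto 0).comp hlim
  simpa [Function.comp_def] using hre.add (hk.tendsto_integral_Ioi_comp_sub.const_mul c)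

end Tauberian

section WienerIkehara

open Complex MeasureTheory Set
open scoped Topology

variable {a : ℕ → ℝ} {M c : ℝ}

lemma LSeries_eq_mul_integral_exp (ha : ∀ n, 0 ≤ a n)
    (hM : ∀ n : ℕ, ∑ k ∈ Finset.Icc 1 n, a k ≤ M * n) {s : ℂ} (hs : 1 < s.re) :
    LSeries (fun n => (a n : ℂ)) s = s * ∫ u in Ioi (0 : ℝ), exp (-(s - 1) * u) *
      ((Real.exp (-u) * ∑ k ∈ Finset.Icc 1 ⌊Real.exp u⌋₊, a k : ℝ) : ℂ) := by
  have hO : (fun n : ℕ => ∑ k ∈ Finset.Icc 1 n, a k) =O[atTop] fun n : ℕ => (n : ℝ) ^ (1 : ℝ) := by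
    refine .of_bound M (.of_forall fun n => ?_)
    rw [Real.norm_of_nonneg (Finset.sum_nonneg fun _ _ => ha _), Real.rpow_one,
      Real.norm_natCast]
    exact hM n
  rw [LSeries_eq_mul_integral_of_nonneg a zero_le_one hs hO ha, ← Real.exp_zero,
    ← integral_comp_exp_Ioi]
  refine congrArg (s * ·) (setIntegral_congr_fun measurableSet_Ioi fun u _ => ?_)
  have hcpow : ((Real.exp u : ℝ) : ℂ) ^ (-(s + 1)) = exp (-(s + 1) * u) := by
    rw [cpow_def_of_ne_zero (ofReal_ne_zero.2 (Real.exp_pos u).ne'), ← ofReal_log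
      (Real.exp_pos u).le, Real.log_exp, mul_comm]
  have hexp : exp u * exp (-(s + 1) * u) = exp (-(s - 1) * u) * exp (-u) := by
    rw [← exp_add, ← exp_add]
    ring_nf
  simp only [hcpow, real_smul]
  push_cast
  rw [mul_left_comm, hexp]
  ring

theorem wiener_ikehara (ha : ∀ n, 0 ≤ a n)
    (hM : ∀ n : ℕ, ∑ k ∈ Finset.Icc 1 n, a k ≤ M * n) {G : ℂ → ℂ}
    (hG : ContinuousOn G {s | 1 ≤ s.re})
    (hGL : ∀ s : ℂ, 1 < s.re → LSeries (fun n => (a n : ℂ)) s = c / (s - 1) + G s) :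
    Tendsto (fun n : ℕ => (∑ k ∈ Finset.Icc 1 n, a k) / n) atTop (𝓝 c) := by
  let A : ℝ → ℝ := fun x => ∑ k ∈ Finset.Icc 1 ⌊x⌋₊, a k
  have hA : Monotone A := fun x y hxy => Finset.sum_le_sum_of_subset_of_nonneg
    (Finset.Icc_subset_Icc_right (Nat.floor_mono hxy)) fun _ _ _ => ha _
  have hM0 : 0 ≤ M := by simpa using (Finset.sum_nonneg fun _ _ => ha _).trans (hM 1)
  have hAM (u : ℝ) : Real.exp (-u) * A (Real.exp u) ≤ M := by
    rw [Real.exp_neg, inv_mul_le_iff₀ (Real.exp_pos u), mul_comm]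
    exact (hM _).trans (mul_le_mul_of_nonneg_left (Nat.floor_le (Real.exp_pos u).le) hM0)
  have hne {z : ℂ} (hz : 0 ≤ z.re) : 1 + z ≠ 0 := fun h => by
    have := congrArg re h
    simp only [add_re, one_re, zero_re] at this
    linarith
  have hH : ContinuousOn (fun z => (G (1 + z) - c) / (1 + z)) {z : ℂ | 0 ≤ z.re} :=
    ((hG.comp (by fun_prop) fun z hz => by simpa using hz).sub continuousOn_const).div
      (by fun_prop) fun z hz => hne hz
  have hlim : Tendsto (fun u => Real.exp (-u) * A (Real.exp u)) atTop (𝓝 c) := by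
    refine tendsto_of_laplace_sub_pole_continuousOn
      (fun u => mul_nonneg (Real.exp_pos _).le (Finset.sum_nonneg fun _ _ => ha _)) hAM
      (fun u v huv => ?_) hH fun z hz => ?_
    · simpa [← mul_assoc, ← Real.exp_add] using hA (Real.exp_le_exp.2 huv)
    · have hs : 1 < (1 + z).re := by simpa using hz
      have hz0 : z ≠ 0 := fun h => by simp [h] at hz
      have hz1 : 1 + z ≠ 0 := hne hz.le
      have hL := (LSeries_eq_mul_integral_exp ha hM hs).symm.trans (hGL _ hs)
      rw [add_sub_cancel_left] at hL
      rw [eq_div_of_mul_eq hz1 ((mul_comm _ _).trans hL)]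
      field_simp
      ring
  refine (hlim.comp (Real.tendsto_log_atTop.comp tendsto_natCast_atTop_atTop)).congr' ?_
  filter_upwards [eventually_gt_atTop 0] with n hn
  have hn0 : (0 : ℝ) < n := Nat.cast_pos.2 hn
  simp [A, Real.exp_neg, Real.exp_log hn0, div_eq_inv_mul]

end WienerIkehara

section PrimesInArithmeticProgressions

open ArithmeticFunction
open scoped Topology

/-- The Chebyshev function `θ(n; q, a)` of a residue class `a` modulo `q`. -/
noncomputable def thetaAP {q : ℕ} (a : ZMod q) (n : ℕ) : ℝ :=
  ∑ p ∈ n.primesLE with ((p : ℕ) : ZMod q) = a, Real.log p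

lemma sum_residueClass_eq_thetaAP_add {q : ℕ} (a : ZMod q) (n : ℕ) :
    ∑ k ∈ Finset.Icc 1 n, vonMangoldt.residueClass a k =
      thetaAP a n + ∑ k ∈ Finset.Icc 1 n with ¬k.Prime, vonMangoldt.residueClass a k := by
  rw [← Finset.sum_filter_add_sum_filter_not (Finset.Icc 1 n) Nat.Prime,
    ← Nat.primesLE_eq_filter_Icc_one]
  congr 1
  rw [thetaAP, Finset.sum_filter]
  refine Finset.sum_congr rfl fun p hp => ?_
  simp only [vonMangoldt.residueClass, Set.indicator_apply, Set.mem_ofPred_eq,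
    vonMangoldt_apply_prime (Nat.prime_of_mem_primesLE hp)]

lemma tendsto_sum_residueClass_div {q : ℕ} [NeZero q] {a : ZMod q} (ha : IsUnit a) :
    Tendsto (fun n : ℕ => (∑ k ∈ Finset.Icc 1 n, vonMangoldt.residueClass a k) / n) atTop
      (𝓝 (q.totient : ℝ)⁻¹) := by
  refine wiener_ikehara (M := Real.log 4 + 4) (vonMangoldt.residueClass_nonneg a) (fun n => ?_)
    (vonMangoldt.continuousOn_LFunctionResidueClassAux a) fun s hs => ?_
  · refine le_trans ?_ (Chebyshev.psi_le_const_mul_self (Nat.cast_nonneg n))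
    rw [Chebyshev.psi, Nat.floor_natCast]
    exact Finset.sum_le_sum fun k _ => vonMangoldt.residueClass_le a k
  · rw [vonMangoldt.eqOn_LFunctionResidueClassAux ha hs]
    push_cast
    ring

lemma exists_sum_not_prime_residueClass_le {q : ℕ} (a : ZMod q) :
    ∃ C : ℝ, ∀ n : ℕ,
      ∑ k ∈ Finset.Icc 1 n with ¬k.Prime, vonMangoldt.residueClass a k ≤ C * √n := by
  obtain ⟨C, hC⟩ := Chebyshev.psi_sub_theta_le_mul_sqrt
  refine ⟨C, fun n => ?_⟩
  have hCn := hC n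
  rw [Chebyshev.psi_sub_theta_eq_sum_not_prime, Nat.floor_natCast] at hCn
  exact (Finset.sum_le_sum fun k _ => vonMangoldt.residueClass_le a k).trans hCn

theorem tendsto_thetaAP_div {q : ℕ} [NeZero q] {a : ZMod q} (ha : IsUnit a) :
    Tendsto (fun n : ℕ => thetaAP a n / n) atTop (𝓝 (q.totient : ℝ)⁻¹) := by
  obtain ⟨C, hC⟩ := exists_sum_not_prime_residueClass_le a
  have hsqrt : Tendsto (fun n : ℕ => C * (√(n : ℝ))⁻¹) atTop (𝓝 0) := by
    simpa using (tendsto_inv_atTop_zero.comp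
      (Real.tendsto_sqrt_atTop.comp tendsto_natCast_atTop_atTop)).const_mul C
  have hpowers : Tendsto (fun n : ℕ =>
      (∑ k ∈ Finset.Icc 1 n with ¬k.Prime, vonMangoldt.residueClass a k) / (n : ℝ)) atTop
      (𝓝 0) := by
    refine squeeze_zero (fun n => div_nonneg
      (Finset.sum_nonneg fun k _ => vonMangoldt.residueClass_nonneg a k) n.cast_nonneg)
      (fun n => ?_) hsqrt
    rw [← Real.sqrt_div_self, ← mul_div_assoc]
    exact div_le_div_of_nonneg_right (hC n) n.cast_nonneg
  simpa [sum_residueClass_eq_thetaAP_add, add_div] using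
    (tendsto_sum_residueClass_div ha).sub hpowers

theorem tendsto_theta_div : Tendsto (fun n : ℕ => Chebyshev.theta n / n) atTop (𝓝 1) := by
  simpa [thetaAP, Subsingleton.elim _ (1 : ZMod 1), Chebyshev.theta_eq_sum_primesLE_log] using
    tendsto_thetaAP_div (q := 1) isUnit_one

end PrimesInArithmeticProgressions

section BrunTitchmarsh

lemma dvd_prod_mul_add_of_coprime {l D M : ℕ} (hco : l.Coprime D) (hD : D ∣ M.factorial) (a : ℕ) :
    D ∣ ∏ m ∈ Finset.range M, (l * m + a) := by
  have : NeZero D := ⟨fun h => M.factorial_ne_zero (zero_dvd_iff.1 (h ▸ hD))⟩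
  obtain ⟨u, hu⟩ := ZMod.natCast_zmod_surjective ((l : ZMod D)⁻¹ * (a : ZMod D))
  have hlu : (l : ZMod D) * u = a := by rw [hu, ← mul_assoc, ZMod.coe_mul_inv_eq_one _ hco, one_mul]
  have hfactor : ((∏ m ∈ Finset.range M, (l * m + a) : ℕ) : ZMod D) =
      l ^ M * (u.ascFactorial M : ℕ) := by
    rw [Nat.ascFactorial_eq_prod_range]
    push_cast
    rw [← Finset.card_range M, ← Finset.prod_const, Finset.card_range, ← Finset.prod_mul_distrib]
    exact Finset.prod_congr rfl fun m _ => by linear_combination -hlu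
  rw [← ZMod.natCast_eq_zero_iff, hfactor,
    (ZMod.natCast_eq_zero_iff _ _).2 (hD.trans (u.factorial_dvd_ascFactorial M)), mul_zero]

lemma natCast_zmod_eq_one_iff_dvd_sub_one {q n : ℕ} (hn : 1 ≤ n) :
    (n : ZMod q) = 1 ↔ q ∣ n - 1 := by
  rw [← ZMod.natCast_eq_zero_iff, Nat.cast_sub hn, Nat.cast_one, sub_eq_zero]

lemma prod_primes_modEq_one_dvd {l : ℕ} (n : ℕ) (hl : 0 < l) :
    ∏ p ∈ n.primesLE with n / l < p ∧ ((p : ℕ) : ZMod l) = 1, p ∣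
      ∏ m ∈ Finset.range (n / l), (l * m + (l + 1)) := by
  refine Finset.prod_primes_dvd _
    (fun p hp => (Nat.prime_of_mem_primesLE (Finset.mem_filter.1 hp).1).prime) fun p hp => ?_
  obtain ⟨hpn, -, hp1⟩ := Finset.mem_filter.1 hp
  have hp2 := Nat.two_le_of_mem_primesLE hpn
  obtain ⟨k, hk⟩ := (natCast_zmod_eq_one_iff_dvd_sub_one (by lia)).1 hp1
  obtain ⟨m, rfl⟩ := Nat.exists_eq_add_one_of_ne_zero (n := k) (by rintro rfl; lia)
  have hm : m < n / l := by
    rw [Nat.lt_iff_add_one_le, Nat.le_div_iff_mul_le hl, mul_comm]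
    have := Nat.le_of_mem_primesLE hpn
    lia
  rw [show p = l * m + (l + 1) by lia]
  exact Finset.dvd_prod_of_mem (fun m => l * m + (l + 1)) (Finset.mem_range.2 hm)

lemma prod_range_mul_add_le (l M : ℕ) :
    ∏ m ∈ Finset.range M, (l * m + (l + 1)) ≤ (l + 1) ^ M * M.factorial := by
  calc ∏ m ∈ Finset.range M, (l * m + (l + 1))
      ≤ ∏ m ∈ Finset.range M, (l + 1) * (m + 1) := Finset.prod_le_prod' fun m _ => by lia
    _ = (l + 1) ^ M * M.factorial := by
        rw [Finset.prod_mul_distrib, Finset.prod_const, Finset.card_range,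
          Finset.prod_range_add_one_eq_factorial]

/- The primes involved exceed `M = n / l`, so their product is coprime to the prime-to-`l` part
`D` of `M!`. Both divide `∏ (l * m + 1)` over `1 ≤ m ≤ M`, which is about `l ^ M * M!`. -/
lemma prod_primes_modEq_one_le {l : ℕ} (hl : l.Prime) (n : ℕ) :
    ∏ p ∈ n.primesLE with n / l < p ∧ ((p : ℕ) : ZMod l) = 1, p ≤ l ^ (3 * (n / l)) := by
  set M := n / l
  set P := ∏ p ∈ n.primesLE with M < p ∧ ((p : ℕ) : ZMod l) = 1, p
  set v := M.factorial.factorization l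
  set D := M.factorial / l ^ v
  have hl2 := hl.two_le
  have hD : D ∣ M.factorial := Nat.ordCompl_dvd _ _
  have hcoprime : P.Coprime D := Nat.Coprime.prod_left fun p hp => by
    obtain ⟨hpn, hMp, -⟩ := Finset.mem_filter.1 hp
    have hpp := Nat.prime_of_mem_primesLE hpn
    exact ((Nat.coprime_factorial_iff hpp.ne_one).2 (by rwa [hpp.minFac_eq])).coprime_dvd_right hD
  have hPD : P * D ∣ ∏ m ∈ Finset.range M, (l * m + (l + 1)) :=
    hcoprime.mul_dvd_of_dvd_of_dvd (prod_primes_modEq_one_dvd n hl.pos)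
      (dvd_prod_mul_add_of_coprime (Nat.coprime_ordCompl hl M.factorial_ne_zero) hD _)
  have hv : v ≤ M := (Nat.factorization_factorial_le_div_pred hl M).trans (Nat.div_le_self _ _)
  refine Nat.le_of_mul_le_mul_right ?_ (Nat.ordCompl_pos l M.factorial_ne_zero)
  calc P * D
      ≤ ∏ m ∈ Finset.range M, (l * m + (l + 1)) :=
        Nat.le_of_dvd (Finset.prod_pos fun _ _ => by positivity) hPD
    _ ≤ (l + 1) ^ M * M.factorial := prod_range_mul_add_le l M
    _ = (l + 1) ^ M * (l ^ v * D) := by rw [Nat.ordProj_mul_ordCompl_eq_self]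
    _ ≤ (l ^ 2) ^ M * (l ^ M * D) := by gcongr <;> nlinarith
    _ = l ^ (3 * M) * D := by ring

lemma thetaAP_one_le_add {l : ℕ} (hl : l.Prime) (n : ℕ) :
    thetaAP (1 : ZMod l) n ≤ thetaAP (1 : ZMod l) (n / l) + 3 * (n / l : ℕ) * Real.log l := by
  have hsplit : thetaAP (1 : ZMod l) n = thetaAP (1 : ZMod l) (n / l) +
      ∑ p ∈ n.primesLE with n / l < p ∧ ((p : ℕ) : ZMod l) = 1, Real.log p := by
    rw [thetaAP, thetaAP, ← Finset.sum_filter_not_add_sum_filter _ (fun p => n / l < p),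
      Finset.filter_filter, Finset.filter_filter]
    have hle := Nat.div_le_self n l
    congr 2 <;> ext p <;> simp only [Finset.mem_filter, Nat.mem_primesLE] <;> grind
  have hpos : ∀ p ∈ n.primesLE.filter fun p : ℕ => n / l < p ∧ (p : ZMod l) = 1, (p : ℝ) ≠ 0 :=
    fun p hp => Nat.cast_ne_zero.2 (Nat.prime_of_mem_primesLE (Finset.mem_filter.1 hp).1).ne_zero
  have hlog : Real.log (∏ p ∈ n.primesLE with n / l < p ∧ ((p : ℕ) : ZMod l) = 1, (p : ℝ)) ≤
      Real.log ((l : ℝ) ^ (3 * (n / l))) := by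
    refine Real.log_le_log ((Finset.prod_nonneg fun p _ => p.cast_nonneg).lt_of_ne'
      (Finset.prod_ne_zero_iff.2 hpos)) ?_
    rw [← Nat.cast_prod, ← Nat.cast_pow]
    exact Nat.cast_le.2 (prod_primes_modEq_one_le hl n)
  rw [Real.log_prod hpos, Real.log_pow, Nat.cast_mul, Nat.cast_ofNat] at hlog
  rw [hsplit]
  gcongr

/- Iterating `thetaAP_one_le_add` gives a geometric series with sum at most twice its first term;
unlike the asymptotics of `thetaAP`, this bound is uniform in `l`. -/
theorem thetaAP_one_le {l : ℕ} (hl : l.Prime) (n : ℕ) :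
    thetaAP (1 : ZMod l) n ≤ 6 * n * (Real.log l / l) := by
  have hl2 : (2 : ℝ) ≤ l := mod_cast hl.two_le
  induction n using Nat.strong_induction_on with
  | _ n ih =>
    rcases n.eq_zero_or_pos with rfl | hn
    · simp [thetaAP]
    · have hhalf : Real.log l / l ≤ Real.log l / 2 := by gcongr
      calc thetaAP (1 : ZMod l) n
          ≤ thetaAP (1 : ZMod l) (n / l) + 3 * (n / l : ℕ) * Real.log l := thetaAP_one_le_add hl n
        _ ≤ 6 * (n / l : ℕ) * (Real.log l / l) + 3 * (n / l : ℕ) * Real.log l := by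
            gcongr
            exact ih _ (Nat.div_lt_self hn hl.one_lt)
        _ ≤ 6 * (n / l : ℕ) * (Real.log l / 2) + 3 * (n / l : ℕ) * Real.log l := by gcongr
        _ = 6 * (n / l : ℕ) * Real.log l := by ring
        _ ≤ 6 * (n / l) * Real.log l := by
            gcongr
            exact Nat.cast_div_le
        _ = 6 * n * (Real.log l / l) := by ring

end BrunTitchmarsh

section ShiftedPrimes

open scoped Topology

/-- The sum of `f` over the primes up to `n`, the prime `p` having weight `log p`. By the prime
number theorem, `primeLogSum f n / n` is the mean value of `f` over the primes. -/
noncomputable def primeLogSum (f : ℕ → ℝ) (n : ℕ) : ℝ :=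
  ∑ p ∈ n.primesLE, f p * Real.log p

/-- The product of `1 - x l` over the prime divisors `l` of `n` which belong to `S`: the
`S`-truncation of the function `n ↦ ∏ l ∈ n.primeFactors, (1 - x l)`. -/
noncomputable def truncatedProd (x : ℕ → ℝ) (S : Finset Nat.Primes) (n : ℕ) : ℝ :=
  ∏ l ∈ S with ((l : Nat.Primes) : ℕ) ∣ n, (1 - x l)

lemma sum_primesLE_dvd_sub_one (q n : ℕ) :
    ∑ p ∈ n.primesLE with q ∣ p - 1, Real.log p = thetaAP (1 : ZMod q) n := by
  rw [thetaAP]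
  congr 1
  refine Finset.filter_congr fun p hp => ?_
  rw [natCast_zmod_eq_one_iff_dvd_sub_one (Nat.one_lt_of_mem_primesLE hp).le]

lemma totient_prod_primes (t : Finset Nat.Primes) :
    ((∏ l ∈ t, (l : ℕ)).totient : ℝ) = ∏ l ∈ t, ((l : ℝ) - 1) := by
  induction t using Finset.induction_on with
  | empty => simp
  | insert a s ha ih =>
    have hcoprime : (a : ℕ).Coprime (∏ l ∈ s, (l : ℕ)) := Nat.Coprime.prod_right fun l hl =>
      (Nat.coprime_primes a.2 l.2).2 fun h => ha (Subtype.ext h ▸ hl)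
    rw [Finset.prod_insert ha, Finset.prod_insert ha, Nat.totient_mul hcoprime, Nat.cast_mul, ih,
      Nat.totient_prime a.2, Nat.cast_sub a.2.one_le, Nat.cast_one]

lemma prod_primes_dvd_iff {t : Finset Nat.Primes} {n : ℕ} :
    ∏ l ∈ t, (l : ℕ) ∣ n ↔ ∀ l ∈ t, (l : ℕ) ∣ n := by
  refine ⟨fun h l hl => (Finset.dvd_prod_of_mem _ hl).trans h,
    Finset.prod_dvd_of_isRelPrime fun l _ l' _ hne => ?_⟩
  exact Nat.coprime_iff_isRelPrime.1
    ((Nat.coprime_primes l.2 l'.2).2 (Nat.Primes.coe_nat_injective.ne hne))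

lemma truncatedProd_eq_sum (x : ℕ → ℝ) (S : Finset Nat.Primes) (n : ℕ) :
    truncatedProd x S n =
      ∑ t ∈ S.powerset, if ∏ l ∈ t, (l : ℕ) ∣ n then ∏ l ∈ t, -x l else 0 := by
  have hterm : ∀ l : Nat.Primes, (if (l : ℕ) ∣ n then 1 - x l else 1) =
      1 + if (l : ℕ) ∣ n then -x l else 0 := fun l => by split_ifs <;> ring
  simp only [truncatedProd, Finset.prod_filter, hterm, Finset.prod_one_add, Finset.prod_ite_zero,
    prod_primes_dvd_iff]

lemma primeLogSum_truncatedProd (x : ℕ → ℝ) (S : Finset Nat.Primes) (n : ℕ) :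
    primeLogSum (fun p => truncatedProd x S (p - 1)) n =
      ∑ t ∈ S.powerset, (∏ l ∈ t, -x l) * thetaAP (1 : ZMod (∏ l ∈ t, (l : ℕ))) n := by
  simp_rw [primeLogSum, truncatedProd_eq_sum, Finset.sum_mul, ite_mul, zero_mul]
  rw [Finset.sum_comm]
  exact Finset.sum_congr rfl fun t _ => by
    rw [← Finset.sum_filter, ← Finset.mul_sum, sum_primesLE_dvd_sub_one]

lemma tendsto_primeLogSum_truncatedProd_div (x : ℕ → ℝ) (S : Finset Nat.Primes) :
    Tendsto (fun n : ℕ => primeLogSum (fun p => truncatedProd x S (p - 1)) n / n) atTop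
      (𝓝 (∏ l ∈ S, (1 - x l / ((l : ℝ) - 1)))) := by
  simp_rw [primeLogSum_truncatedProd, Finset.sum_div, mul_div_assoc, sub_eq_add_neg (1 : ℝ) (_ / _),
    Finset.prod_one_add]
  refine tendsto_finsetSum _ fun t _ => ?_
  have : NeZero (∏ l ∈ t, (l : ℕ)) := ⟨Finset.prod_ne_zero_iff.2 fun l _ => l.2.ne_zero⟩
  convert (tendsto_thetaAP_div (isUnit_one (M := ZMod (∏ l ∈ t, (l : ℕ))))).const_mul
    (∏ l ∈ t, -x l) using 2
  rw [totient_prod_primes, ← div_eq_mul_inv, ← Finset.prod_div_distrib]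
  exact Finset.prod_congr rfl fun l _ => (neg_div _ _).symm

lemma truncatedProd_eq_prod_primeFactors (x : ℕ → ℝ) {S : Finset Nat.Primes} {n : ℕ} (hn : n ≠ 0)
    (hS : ∀ l : Nat.Primes, (l : ℕ) ∣ n → l ∈ S) :
    truncatedProd x S n = ∏ l ∈ n.primeFactors, (1 - x l) := by
  refine Finset.prod_bij (fun l _ => (l : ℕ)) (fun l hl => ?_)
    (fun _ _ _ _ h => Nat.Primes.coe_nat_injective h) (fun l hl => ?_) fun _ _ => rfl
  · exact Nat.mem_primeFactors.2 ⟨l.2, (Finset.mem_filter.1 hl).2, hn⟩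
  · obtain ⟨hlp, hln, -⟩ := Nat.mem_primeFactors.1 hl
    exact ⟨⟨l, hlp⟩, Finset.mem_filter.2 ⟨hS _ hln, hln⟩, rfl⟩

lemma one_sub_sum_le_prod_one_sub {ι : Type*} {s : Finset ι} {x : ι → ℝ} (h0 : ∀ i ∈ s, 0 ≤ x i)
    (h1 : ∀ i ∈ s, x i ≤ 1) : 1 - ∑ i ∈ s, x i ≤ ∏ i ∈ s, (1 - x i) := by
  classical
  induction s using Finset.induction_on with
  | empty => simp
  | insert a s ha ih =>
    rw [Finset.forall_mem_insert] at h0 h1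
    have hle : ∏ i ∈ s, (1 - x i) ≤ 1 := Finset.prod_le_one
      (fun i hi => sub_nonneg.2 (h1.2 i hi)) fun i hi => sub_le_self _ (h0.2 i hi)
    rw [Finset.prod_insert ha, Finset.sum_insert ha]
    nlinarith [ih h0.2 h1.2, mul_le_mul_of_nonneg_left hle h0.1]

section Truncation

variable {x : ℕ → ℝ} (h0 : ∀ l : Nat.Primes, 0 ≤ x l) (h1 : ∀ l : Nat.Primes, x l ≤ 1)
include h0 h1

lemma truncatedProd_mem_Icc (S : Finset Nat.Primes) (n : ℕ) :
    truncatedProd x S n ∈ Set.Icc 0 1 :=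
  ⟨Finset.prod_nonneg fun l _ => sub_nonneg.2 (h1 l),
    Finset.prod_le_one (fun l _ => sub_nonneg.2 (h1 l)) fun l _ => sub_le_self _ (h0 l)⟩

lemma abs_truncatedProd_sub_le {S U : Finset Nat.Primes} (hSU : S ⊆ U) (n : ℕ) :
    |truncatedProd x U n - truncatedProd x S n| ≤
      ∑ l ∈ U \ S with ((l : Nat.Primes) : ℕ) ∣ n, x l := by
  have hmul : truncatedProd x U n = truncatedProd x (U \ S) n * truncatedProd x S n := by
    simp only [truncatedProd, Finset.prod_filter]
    exact (Finset.prod_sdiff hSU).symm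
  obtain ⟨hS0, hS1⟩ := truncatedProd_mem_Icc h0 h1 S n
  obtain ⟨-, hD1⟩ := truncatedProd_mem_Icc h0 h1 (U \ S) n
  have hD : 1 - ∑ l ∈ U \ S with ((l : Nat.Primes) : ℕ) ∣ n, x l ≤ truncatedProd x (U \ S) n :=
    one_sub_sum_le_prod_one_sub (fun l _ => h0 l) fun l _ => h1 l
  calc |truncatedProd x U n - truncatedProd x S n|
      = (1 - truncatedProd x (U \ S) n) * truncatedProd x S n := by
        rw [hmul, abs_sub_comm, abs_of_nonneg] <;> nlinarith
    _ ≤ 1 - truncatedProd x (U \ S) n := mul_le_of_le_one_right (sub_nonneg.2 hD1) hS1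
    _ ≤ ∑ l ∈ U \ S with ((l : Nat.Primes) : ℕ) ∣ n, x l := by linarith

lemma abs_primeLogSum_truncatedProd_sub_le {S U : Finset Nat.Primes} (hSU : S ⊆ U) (n : ℕ) :
    |primeLogSum (fun p => truncatedProd x U (p - 1)) n -
      primeLogSum (fun p => truncatedProd x S (p - 1)) n| ≤
      ∑ l ∈ U \ S, x l * (6 * n * (Real.log l / l)) := by
  rw [primeLogSum, primeLogSum, ← Finset.sum_sub_distrib]
  calc |∑ p ∈ n.primesLE, (truncatedProd x U (p - 1) * Real.log p -
          truncatedProd x S (p - 1) * Real.log p)|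
      ≤ ∑ p ∈ n.primesLE, ∑ l ∈ U \ S, if (l : ℕ) ∣ p - 1 then x l * Real.log p else 0 := by
        refine (Finset.abs_sum_le_sum_abs _ _).trans (Finset.sum_le_sum fun p _ => ?_)
        rw [← sub_mul, abs_mul, abs_of_nonneg (Real.log_natCast_nonneg p), ← Finset.sum_filter,
          ← Finset.sum_mul]
        exact mul_le_mul_of_nonneg_right (abs_truncatedProd_sub_le h0 h1 hSU _)
          (Real.log_natCast_nonneg p)
    _ = ∑ l ∈ U \ S, x l * thetaAP (1 : ZMod l) n := by
        rw [Finset.sum_comm]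
        exact Finset.sum_congr rfl fun l _ => by
          rw [← Finset.sum_filter, ← Finset.mul_sum, sum_primesLE_dvd_sub_one]
    _ ≤ ∑ l ∈ U \ S, x l * (6 * n * (Real.log l / l)) :=
        Finset.sum_le_sum fun l _ => mul_le_mul_of_nonneg_left (thetaAP_one_le l.2 n) (h0 l)

lemma abs_primeLogSum_prod_primeFactors_sub_le
    (hx : Summable fun l : Nat.Primes => x l * (Real.log l / l)) (S : Finset Nat.Primes) (n : ℕ) :
    |primeLogSum (fun p => ∏ l ∈ (p - 1).primeFactors, (1 - x l)) n -
      primeLogSum (fun p => truncatedProd x S (p - 1)) n| ≤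
      6 * ((∑' l : Nat.Primes, x l * (Real.log l / l)) - ∑ l ∈ S, x l * (Real.log l / l)) * n := by
  have hfinite : {l : Nat.Primes | (l : ℕ) ≤ n}.Finite :=
    (Set.finite_Iic n).preimage Nat.Primes.coe_nat_injective.injOn
  obtain ⟨U, hSU, hU⟩ : ∃ U : Finset Nat.Primes, S ⊆ U ∧ ∀ l : Nat.Primes, (l : ℕ) ≤ n → l ∈ U :=
    ⟨S ∪ hfinite.toFinset, Finset.subset_union_left, fun l hl =>
      Finset.mem_union_right _ (hfinite.mem_toFinset.2 hl)⟩
  have hfull : primeLogSum (fun p => ∏ l ∈ (p - 1).primeFactors, (1 - x l)) n =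
      primeLogSum (fun p => truncatedProd x U (p - 1)) n := by
    refine Finset.sum_congr rfl fun p hp => ?_
    have hp1 := Nat.one_lt_of_mem_primesLE hp
    have hpn := Nat.le_of_mem_primesLE hp
    simp only
    rw [truncatedProd_eq_prod_primeFactors x (n := p - 1) (by lia) fun l hl =>
      hU l ((Nat.le_of_dvd (by lia) hl).trans (by lia))]
  have htail : ∑ l ∈ U \ S, x l * (Real.log l / l) + ∑ l ∈ S, x l * (Real.log l / l) ≤
      ∑' l : Nat.Primes, x l * (Real.log l / l) := by
    rw [Finset.sum_sdiff hSU]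
    exact hx.sum_le_tsum _ fun l _ =>
      mul_nonneg (h0 l) (div_nonneg (Real.log_natCast_nonneg l) (Nat.cast_nonneg _))
  rw [hfull]
  calc |primeLogSum (fun p => truncatedProd x U (p - 1)) n -
        primeLogSum (fun p => truncatedProd x S (p - 1)) n|
      ≤ ∑ l ∈ U \ S, x l * (6 * n * (Real.log l / l)) :=
        abs_primeLogSum_truncatedProd_sub_le h0 h1 hSU n
    _ = 6 * (∑ l ∈ U \ S, x l * (Real.log l / l)) * n := by
        rw [Finset.mul_sum, Finset.sum_mul]
        exact Finset.sum_congr rfl fun l _ => by ring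
    _ ≤ _ := by
        gcongr
        linarith

omit h1 in
lemma summable_div_sub_one_of_summable_mul_log_div
    (hx : Summable fun l : Nat.Primes => x l * (Real.log l / l)) :
    Summable fun l : Nat.Primes => x l / ((l : ℝ) - 1) := by
  have hlog2 : 0 < Real.log 2 := Real.log_pos one_lt_two
  refine .of_nonneg_of_le (fun l => ?_) (fun l => ?_) (hx.mul_left (2 / Real.log 2))
  · exact div_nonneg (h0 l) (sub_nonneg.2 (mod_cast l.2.one_le))
  · have hl2 : (2 : ℝ) ≤ l := mod_cast l.2.two_le
    have hlog : Real.log 2 ≤ Real.log l := Real.log_le_log two_pos hl2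
    have hinv : ((l : ℝ) - 1)⁻¹ ≤ 2 / l := by
      rw [inv_le_comm₀ (by linarith) (by positivity), inv_div]
      linarith
    calc x l / ((l : ℝ) - 1) ≤ x l * (2 / l) := mul_le_mul_of_nonneg_left hinv (h0 l)
      _ ≤ x l * (2 / l) * (Real.log l / Real.log 2) :=
        le_mul_of_one_le_right (mul_nonneg (h0 l) (by positivity)) ((one_le_div hlog2).2 hlog)
      _ = 2 / Real.log 2 * (x l * (Real.log l / l)) := by ring

theorem tendsto_primeLogSum_prod_primeFactors_div
    (hx : Summable fun l : Nat.Primes => x l * (Real.log l / l)) :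
    Tendsto (fun n : ℕ => primeLogSum (fun p => ∏ l ∈ (p - 1).primeFactors, (1 - x l)) n / n) atTop
      (𝓝 (∏' l : Nat.Primes, (1 - x l / ((l : ℝ) - 1)))) := by
  have hmult : Multipliable fun l : Nat.Primes => 1 - x l / ((l : ℝ) - 1) := by
    simpa only [sub_eq_add_neg] using Real.multipliable_one_add_of_summable
      (summable_div_sub_one_of_summable_mul_log_div h0 hx).neg
  have htail : Tendsto (fun S : Finset Nat.Primes =>
      6 * ((∑' l : Nat.Primes, x l * (Real.log l / l)) - ∑ l ∈ S, x l * (Real.log l / l)))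
      atTop (𝓝 0) := by
    simpa only [SummationFilter.unconditional_filter, sub_self, mul_zero] using
      (Tendsto.const_sub (∑' l : Nat.Primes, x l * (Real.log l / l)) hx.hasSum).const_mul 6
  refine TendstoUniformly.tendsto_of_eventually_tendsto (p := atTop)
    (F := fun (S : Finset Nat.Primes) (n : ℕ) =>
      primeLogSum (fun p => truncatedProd x S (p - 1)) n / n)
    (Metric.tendstoUniformly_iff.2 fun ε hε => ?_)
    (.of_forall (tendsto_primeLogSum_truncatedProd_div x)) hmult.hasProd
  filter_upwards [htail.eventually_lt_const hε] with S hS n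
  refine lt_of_le_of_lt ?_ hS
  rw [Real.dist_eq, ← sub_div, abs_div, Nat.abs_cast]
  exact div_le_of_le_mul₀ n.cast_nonneg
    (nonneg_of_mul_nonneg_left ((abs_nonneg _).trans
      (abs_primeLogSum_prod_primeFactors_sub_le h0 h1 hx S 1)) (by simp))
    (abs_primeLogSum_prod_primeFactors_sub_le h0 h1 hx S n)

end Truncation

end ShiftedPrimes

section AverageOverPrimes

open scoped Topology Nat.Prime

lemma tendsto_primeCounting_mul_log_sub_theta_div :
    Tendsto (fun n : ℕ => (π n * Real.log n - Chebyshev.theta n) / n) atTop (𝓝 0) := by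
  obtain ⟨C, hC⟩ := Chebyshev.primeCounting_sub_theta_div_log_isBigO.bound
  have hlog : Tendsto (fun n : ℕ => C * (Real.log n)⁻¹) atTop (𝓝 0) := by
    simpa using (tendsto_inv_atTop_zero.comp
      (Real.tendsto_log_atTop.comp tendsto_natCast_atTop_atTop)).const_mul C
  refine squeeze_zero_norm' ?_ hlog
  filter_upwards [tendsto_natCast_atTop_atTop.eventually hC, eventually_ge_atTop 2] with n hn hn2
  have hlog_pos : 0 < Real.log n := Real.log_pos (mod_cast hn2)
  rw [Nat.floor_natCast, Real.norm_of_nonneg (by positivity : 0 ≤ (n : ℝ) / Real.log n ^ 2)] at hn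
  calc ‖(π n * Real.log n - Chebyshev.theta n) / n‖
      = ‖(π n : ℝ) - Chebyshev.theta n / Real.log n‖ * (Real.log n / n) := by
        rw [← Real.norm_of_nonneg (by positivity : 0 ≤ Real.log n / (n : ℝ)), ← norm_mul]
        congr 1
        field_simp
    _ ≤ C * (n / Real.log n ^ 2) * (Real.log n / n) := by gcongr
    _ = C * (Real.log n)⁻¹ := by field_simp

lemma abs_sum_primesLE_mul_log_sub_primeLogSum_le {f : ℕ → ℝ} {C : ℝ}
    (hf : ∀ p, p.Prime → |f p| ≤ C) (n : ℕ) :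
    |(∑ p ∈ n.primesLE, f p) * Real.log n - primeLogSum f n| ≤
      C * (π n * Real.log n - Chebyshev.theta n) := by
  have hcount : (π n : ℝ) * Real.log n = ∑ _p ∈ n.primesLE, Real.log n := by
    rw [Finset.sum_const, Nat.primesLE_card_eq_primeCounting, nsmul_eq_mul]
  rw [hcount, Chebyshev.theta_eq_sum_primesLE_log, primeLogSum, Finset.sum_mul,
    ← Finset.sum_sub_distrib, ← Finset.sum_sub_distrib, Finset.mul_sum]
  refine (Finset.abs_sum_le_sum_abs _ _).trans (Finset.sum_le_sum fun p hp => ?_)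
  obtain ⟨hpn, hpp⟩ := Nat.mem_primesLE.1 hp
  have hlog : Real.log p ≤ Real.log n :=
    Real.log_le_log (mod_cast hpp.pos) (mod_cast hpn)
  rw [← mul_sub, abs_mul, abs_of_nonneg (sub_nonneg.2 hlog)]
  exact mul_le_mul_of_nonneg_right (hf p hpp) (sub_nonneg.2 hlog)

lemma tendsto_sum_primesLE_div_primeCounting {f : ℕ → ℝ} {C A : ℝ}
    (hf : ∀ p, p.Prime → |f p| ≤ C)
    (hA : Tendsto (fun n : ℕ => primeLogSum f n / n) atTop (𝓝 A)) :
    Tendsto (fun n : ℕ => (∑ p ∈ n.primesLE, f p) / π n) atTop (𝓝 A) := by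
  have herror : Tendsto (fun n : ℕ =>
      ((∑ p ∈ n.primesLE, f p) * Real.log n - primeLogSum f n) / n) atTop (𝓝 0) := by
    refine squeeze_zero_norm (fun n => ?_)
      (by simpa using tendsto_primeCounting_mul_log_sub_theta_div.const_mul C)
    rw [Real.norm_eq_abs, abs_div, Nat.abs_cast, ← mul_div_assoc]
    exact div_le_div_of_nonneg_right (abs_sum_primesLE_mul_log_sub_primeLogSum_le hf n)
      n.cast_nonneg
  have hnum : Tendsto (fun n : ℕ => (∑ p ∈ n.primesLE, f p) * Real.log n / n) atTop (𝓝 A) := by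
    simpa [← add_div] using herror.add hA
  have hden : Tendsto (fun n : ℕ => π n * Real.log n / n) atTop (𝓝 1) := by
    simpa [← add_div] using tendsto_primeCounting_mul_log_sub_theta_div.add tendsto_theta_div
  rw [← div_one A]
  refine (hnum.div hden one_ne_zero).congr' ?_
  filter_upwards [eventually_ge_atTop 2] with n hn
  have hlog_pos : 0 < Real.log n := Real.log_pos (mod_cast hn)
  rw [Pi.div_apply, div_div_div_cancel_right₀ (by positivity), mul_div_mul_right _ _ hlog_pos.ne']

lemma sum_range_filter_eq_sum_nth {M : Type*} [AddCommMonoid M] (P : ℕ → Prop) [DecidablePred P]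
    (f : ℕ → M) (m : ℕ) :
    ∑ k ∈ Finset.range m with P k, f k = ∑ i ∈ Finset.range (Nat.count P m), f (Nat.nth P i) := by
  induction m with
  | zero => simp
  | succ m ih =>
    rw [Finset.range_add_one, Finset.filter_insert, Nat.count_succ]
    split_ifs with hm
    · rw [Finset.sum_insert (by simp), ih, Finset.sum_range_succ, Nat.nth_count hm, add_comm]
    · rw [ih, add_zero]

theorem tendsto_average_nth_prime_of_tendsto_primeLogSum_div {f : ℕ → ℝ} {C A : ℝ}
    (hf : ∀ p, p.Prime → |f p| ≤ C)
    (hA : Tendsto (fun n : ℕ => primeLogSum f n / n) atTop (𝓝 A)) :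
    Tendsto (fun N : ℕ => 1 / (N : ℝ) * ∑ i ∈ Finset.range N, f (Nat.nth Nat.Prime i)) atTop
      (𝓝 A) := by
  have hatTop : Tendsto (fun N => Nat.nth Nat.Prime N - 1) atTop atTop :=
    tendsto_atTop_mono (fun N =>
      Nat.le_sub_one_of_lt (Nat.lt_of_succ_lt (Nat.add_two_le_nth_prime N))) tendsto_id
  have hsum : ∀ N, ∑ p ∈ (Nat.nth Nat.Prime N - 1).primesLE, f p =
      ∑ i ∈ Finset.range N, f (Nat.nth Nat.Prime i) := fun N => by
    rw [← Nat.primesBelow_eq_primesLE_sub_one, Nat.primesBelow, sum_range_filter_eq_sum_nth,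
      Nat.count_nth_of_infinite Nat.infinite_setOfPred_prime]
  have hcard : ∀ N, π (Nat.nth Nat.Prime N - 1) = N := fun N => by
    rw [← Nat.primesLE_card_eq_primeCounting, ← Nat.primesBelow_eq_primesLE_sub_one,
      Nat.primesBelow, ← Nat.count_eq_card_filter_range,
      Nat.count_nth_of_infinite Nat.infinite_setOfPred_prime]
  refine ((tendsto_sum_primesLE_div_primeCounting hf hA).comp hatTop).congr fun N => ?_
  rw [Function.comp_apply, hsum, hcard, one_div_mul_eq_div]

end AverageOverPrimes

lemma summable_log_div_sq : Summable fun n : ℕ => Real.log n / (n : ℝ) ^ 2 := by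
  refine .of_nonneg_of_le (fun n => div_nonneg (Real.log_natCast_nonneg n) (sq_nonneg _))
    (fun n => ?_) ((Real.summable_one_div_nat_rpow (p := 3 / 2).2 (by norm_num)).mul_left 2)
  rcases n.eq_zero_or_pos with rfl | hn
  · simp
  have hn0 : (0 : ℝ) < n := mod_cast hn
  calc Real.log n / (n : ℝ) ^ 2
      ≤ (n : ℝ) ^ (1 / 2 : ℝ) / (1 / 2) / (n : ℝ) ^ 2 := by
        gcongr
        exact Real.log_le_rpow_div hn0.le one_half_pos
    _ = 2 * (1 / (n : ℝ) ^ (3 / 2 : ℝ)) := by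
        have hpow : (n : ℝ) ^ 2 = (n : ℝ) ^ (1 / 2 : ℝ) * (n : ℝ) ^ (3 / 2 : ℝ) := by
          rw [← Real.rpow_add hn0, ← Real.rpow_natCast]
          norm_num
        rw [hpow]
        field_simp

lemma totient_div_eq_prod_primeFactors {n : ℕ} (hn : n ≠ 0) :
    (n.totient : ℝ) / n = ∏ l ∈ n.primeFactors, (1 - (l : ℝ)⁻¹) := by
  have htotient : (n.totient : ℝ) = n * ∏ l ∈ n.primeFactors, (1 - (l : ℝ)⁻¹) := by
    simpa using congrArg (Rat.cast : ℚ → ℝ) n.totient_eq_mul_prod_factors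
  rw [htotient, mul_div_cancel_left₀ _ (Nat.cast_ne_zero.2 hn)]

lemma artinConstant_eq_tprod :
    artinConstant = ∏' l : Nat.Primes, (1 - (l : ℝ)⁻¹ / ((l : ℝ) - 1)) := by
  simp only [artinConstant, one_div, mul_inv, ← div_eq_mul_inv]

lemma tendsto_primeLogSum_totient_div :
    Tendsto (fun n : ℕ => primeLogSum (fun p => ((p - 1).totient : ℝ) / ((p : ℝ) - 1)) n / n) atTop
      (nhds artinConstant) := by
  have hsummable : Summable fun l : Nat.Primes => (l : ℝ)⁻¹ * (Real.log l / l) :=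
    (summable_log_div_sq.comp_injective Nat.Primes.coe_nat_injective).congr fun l => by
      rw [Function.comp_apply, sq, inv_mul_eq_div, div_div]
  rw [artinConstant_eq_tprod]
  refine (tendsto_primeLogSum_prod_primeFactors_div (x := fun l => (l : ℝ)⁻¹)
    (fun l => inv_nonneg.2 (Nat.cast_nonneg _)) (fun l => Nat.cast_inv_le_one _)
    hsummable).congr fun n => ?_
  congr 1
  refine Finset.sum_congr rfl fun p hp => ?_
  have hp1 := Nat.one_lt_of_mem_primesLE hp
  simp only
  rw [← totient_div_eq_prod_primeFactors (by lia), Nat.cast_pred (by lia)]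

/-- The average `(1/N) ∑_{i=1}^N φ(p_i - 1)/(p_i - 1)` over the first `N` primes
tends to Artin's constant. -/
theorem artin_summation_formula :
    Tendsto (fun N : ℕ =>
        (1 / (N : ℝ)) * ∑ i ∈ Finset.range N,
          ((Nat.nth Nat.Prime i - 1).totient : ℝ) / ((Nat.nth Nat.Prime i : ℝ) - 1))
      atTop (nhds artinConstant) := by
  refine tendsto_average_nth_prime_of_tendsto_primeLogSum_div (C := 1)
    (f := fun p => ((p - 1).totient : ℝ) / ((p : ℝ) - 1)) (fun p hp => ?_)
    tendsto_primeLogSum_totient_div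
  have hp1 : 1 ≤ p := hp.one_le
  rw [← Nat.cast_pred hp1, abs_of_nonneg (by positivity)]
  exact div_le_one_of_le₀ (Nat.cast_le.2 (Nat.totient_le _)) (Nat.cast_nonneg _)
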